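/- Let I ⊆ ℚ ∩ [0,∞) be a set satisfying the descending chain condition all of whose accumulation points in ℝ are rational. Then every accumulation point of I₊ in ℝ is rational, and every accumulation point of D(I) in ℝ is rational. -/

import Mathlib

open Filter

/-- A set of reals satisfies the descending chain condition (DCC) if it contains
no infinite strictly decreasing sequence. -/
def DCC (S : Set ℝ) : Prop := ¬ ∃ f : ℕ → ℝ, StrictAnti f ∧ ∀ n, f n ∈ S

/-- A set of reals satisfies the ascending chain condition (ACC) if it contains
no infinite strictly increasing sequence. -/
def ACC (S : Set ℝ) : Prop := ¬ ∃ f : ℕ → ℝ, StrictMono f ∧ ∀ n, f n ∈ S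

/-- `x` is an accumulation point of `S` if every neighborhood of `x` contains a
point of `S` different from `x`. -/
def IsAccPt (x : ℝ) (S : Set ℝ) : Prop := ∀ ε > 0, ∃ y ∈ S, y ≠ x ∧ |y - x| < ε

/-- The set `∂S` of accumulation points of `S` in `ℝ`. -/
def accPts (S : Set ℝ) : Set ℝ := {x | IsAccPt x S}

/-- The set of all (nonempty) finite sums of elements of `I`. -/
def finSums (I : Set ℝ) : Set ℝ :=
  {x | ∃ l : ℕ, 0 < l ∧ ∃ g : Fin l → ℝ, (∀ p, g p ∈ I) ∧ x = ∑ p, g p}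

/-- `I₊ = {0} ∪ { x ∈ [0,1] : x is a nonempty finite sum of elements of I }`. -/
def plusSet (I : Set ℝ) : Set ℝ := {0} ∪ (Set.Icc 0 1 ∩ finSums I)

/-- `D(I) = { a ≤ 1 : a = (m - 1 + f)/m, m ∈ ℕ⁺, f ∈ I₊ }`. -/
def DSet (I : Set ℝ) : Set ℝ :=
  {a | a ≤ 1 ∧ ∃ m : ℕ, 0 < m ∧ ∃ f ∈ plusSet I, a = ((m : ℝ) - 1 + f) / m}

/-- `𝒟_c(I;J) = { a ≤ 1 : a = (m - 1 + f + kc)/m, m ∈ ℕ⁺, f ∈ I₊,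
k a nonzero finite sum of elements of J }`. -/
def DcSet (I J : Set ℝ) (c : ℝ) : Set ℝ :=
  {a | a ≤ 1 ∧ ∃ m : ℕ, 0 < m ∧ ∃ f ∈ plusSet I, ∃ k ∈ finSums J, k ≠ 0 ∧
    a = ((m : ℝ) - 1 + f + k * c) / m}

/-- The closure `S̄ = S ∪ ∂S` of `S` in `ℝ`. -/
def clSet (S : Set ℝ) : Set ℝ := S ∪ accPts S

/-- In a DCC set the positive elements are bounded away from zero. -/
lemma DCC.exists_pos_le {I : Set ℝ} (hI : DCC I) :
    ∃ δ > 0, ∀ x ∈ I, 0 < x → δ ≤ x := by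
  have hwf : I.IsWF := Set.isWF_iff_no_descending_seq.2 fun f hf h => hI ⟨f, hf, h⟩
  have hwf' : (I ∩ Set.Ioi 0).IsWF := hwf.mono Set.inter_subset_left
  by_cases hne : (I ∩ Set.Ioi 0).Nonempty
  · exact ⟨hwf'.min hne, (hwf'.min_mem hne).2, fun x hx h0 => hwf'.min_le hne ⟨hx, h0⟩⟩
  · exact ⟨1, one_pos, fun x hx h0 => (hne ⟨x, hx, h0⟩).elim⟩

lemma IsAccPt.mem_closure {x : ℝ} {S : Set ℝ} (h : IsAccPt x S) : x ∈ closure S := by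
  refine Metric.mem_closure_iff.2 fun ε hε => ?_
  obtain ⟨y, hy, -, hlt⟩ := h ε hε
  exact ⟨y, hy, by rwa [dist_comm, Real.dist_eq]⟩

lemma mem_or_isAccPt_of_mem_closure {x : ℝ} {S : Set ℝ} (h : x ∈ closure S) :
    x ∈ S ∨ IsAccPt x S := by
  refine or_iff_not_imp_left.2 fun hx ε hε => ?_
  obtain ⟨y, hy, hlt⟩ := Metric.mem_closure_iff.1 h ε hε
  exact ⟨y, hy, fun e => hx (e ▸ hy), by rwa [dist_comm, Real.dist_eq] at hlt⟩

open scoped Pointwise in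
lemma isCompact_nsmul {K : Set ℝ} (hK : IsCompact K) (n : ℕ) : IsCompact (n • K) := by
  induction n with
  | zero => simp
  | succ n ih => rw [succ_nsmul]; exact ih.add hK

open scoped Pointwise in
lemma rational_of_mem_nsmul {K : Set ℝ} (hK : ∀ x ∈ K, ∃ q : ℚ, x = (q : ℝ)) (n : ℕ) :
    ∀ x ∈ n • K, ∃ q : ℚ, x = (q : ℝ) := by
  induction n with
  | zero => exact fun x hx => ⟨0, by simpa using hx⟩
  | succ n ih =>
    intro x hx
    rw [succ_nsmul] at hx
    obtain ⟨a, ha, b, hb, rfl⟩ := hx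
    obtain ⟨p, rfl⟩ := ih a ha
    obtain ⟨q, rfl⟩ := hK b hb
    exact ⟨p + q, by push_cast; rfl⟩

open scoped Pointwise in
lemma sum_mem_card_nsmul {ι : Type*} {K : Set ℝ} (s : Finset ι) (g : ι → ℝ)
    (hg : ∀ p ∈ s, g p ∈ K) : ∑ p ∈ s, g p ∈ s.card • K := by
  rw [← Finset.sum_const]
  exact Set.finsetSum_mem_finsetSum s _ g hg

lemma plusSet_subset_Icc (I : Set ℝ) : plusSet I ⊆ Set.Icc 0 1 := by
  rintro x (rfl | hx)
  · simp
  · exact hx.1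

open scoped Pointwise in
/-- If `I` satisfies the DCC, the elements of `plusSet I` are sums of a fixed number of elements of
`({0} ∪ I) ∩ [0, 1]`. -/
lemma exists_plusSet_subset_nsmul {I : Set ℝ} (hI0 : I ⊆ Set.Ici 0) (hI : DCC I) :
    ∃ N : ℕ, plusSet I ⊆ N • (insert 0 I ∩ Set.Icc 0 1) := by
  obtain ⟨δ, hδ, hle⟩ := hI.exists_pos_le
  obtain ⟨N, hN⟩ := exists_nat_ge (1 / δ)
  have h0 : (0 : ℝ) ∈ insert 0 I ∩ Set.Icc 0 1 := ⟨Set.mem_insert _ _, by simp⟩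
  refine ⟨N, ?_⟩
  rintro x (rfl | ⟨hx, l, -, g, hg, rfl⟩)
  · exact Set.nsmul_right_monotone h0 (Nat.zero_le N) (by simp)
  have hg0 : ∀ p, 0 ≤ g p := fun p => hI0 (hg p)
  set s := Finset.univ.filter fun p => 0 < g p with hs
  have hsum : ∑ p ∈ s, g p = ∑ p, g p := by
    refine Finset.sum_subset (Finset.subset_univ _) fun p _ hp => ?_
    exact le_antisymm (by simpa [hs] using hp) (hg0 p)
  have hcard : s.card * δ ≤ 1 := by
    calc (s.card : ℝ) * δ = ∑ _p ∈ s, δ := by simp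
      _ ≤ ∑ p ∈ s, g p := Finset.sum_le_sum fun p hp => hle _ (hg p) (Finset.mem_filter.1 hp).2
      _ ≤ 1 := hsum.trans_le hx.2
  have hsN : s.card ≤ N := by
    have : (s.card : ℝ) ≤ N := ((le_div_iff₀ hδ).2 hcard).trans hN
    exact_mod_cast this
  rw [← hsum]
  refine Set.nsmul_right_monotone h0 hsN (sum_mem_card_nsmul s g fun p _ => ?_)
  exact ⟨Set.mem_insert_of_mem _ (hg p), hg0 p,
    (Finset.single_le_sum (fun q _ => hg0 q) (Finset.mem_univ p)).trans hx.2⟩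

lemma exists_isCompact_rational_plusSet_subset {I : Set ℝ} (hI0 : I ⊆ Set.Ici 0)
    (hIQ : ∀ x ∈ I, ∃ q : ℚ, x = (q : ℝ)) (hI : DCC I)
    (hacc : ∀ x, IsAccPt x I → ∃ q : ℚ, x = (q : ℝ)) :
    ∃ C : Set ℝ, IsCompact C ∧ (∀ x ∈ C, ∃ q : ℚ, x = (q : ℝ)) ∧ plusSet I ⊆ C := by
  obtain ⟨N, hN⟩ := exists_plusSet_subset_nsmul hI0 hI
  have hK : IsCompact (insert 0 (closure I) ∩ Set.Icc 0 1) :=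
    isCompact_Icc.inter_left (isClosed_singleton.union isClosed_closure)
  refine ⟨_, isCompact_nsmul hK N, rational_of_mem_nsmul ?_ N, hN.trans ?_⟩
  · rintro x ⟨rfl | hx, -⟩
    · exact ⟨0, by simp⟩
    · exact (mem_or_isAccPt_of_mem_closure hx).elim (hIQ x) (hacc x)
  · exact Set.nsmul_subset_nsmul_left
      (Set.inter_subset_inter_left _ (Set.insert_subset_insert subset_closure))

/-- Below any bound `c < 1`, only finitely many `m` contribute to `DSet I`. -/
lemma exists_DSet_inter_Iio_subset (I : Set ℝ) {c : ℝ} (hc : c < 1) :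
    ∃ M : ℕ, DSet I ∩ Set.Iio c ⊆
      ⋃ m ∈ Finset.range M, (fun f : ℝ => ((m : ℝ) - 1 + f) / m) '' plusSet I := by
  obtain ⟨M, hM⟩ := exists_nat_ge (1 / (1 - c))
  refine ⟨M, ?_⟩
  rintro a ⟨⟨-, m, hm, f, hf, rfl⟩, hac⟩
  refine Set.mem_biUnion (Finset.mem_coe.2 (Finset.mem_range.2 ?_)) ⟨f, hf, rfl⟩
  have hm' : (0 : ℝ) < m := by exact_mod_cast hm
  have hf0 := (plusSet_subset_Icc I hf).1
  have hlt : (m : ℝ) - 1 + f < c * m := (div_lt_iff₀ hm').1 hac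
  have : (m : ℝ) < 1 / (1 - c) := by
    rw [lt_div_iff₀ (by linarith)]
    linarith
  exact_mod_cast this.trans_le hM

/-- Let `I ⊆ ℚ ∩ [0,∞)` satisfy the DCC with all accumulation points in `ℝ`
rational. Then every accumulation point of `I₊` is rational, and every
accumulation point of `D(I)` is rational. -/
theorem rational_accPts (I : Set ℝ) (hI0 : I ⊆ Set.Ici 0)
    (hIQ : ∀ x ∈ I, ∃ q : ℚ, x = (q : ℝ)) (hI : DCC I)
    (hacc : ∀ x, IsAccPt x I → ∃ q : ℚ, x = (q : ℝ)) :
    (∀ x, IsAccPt x (plusSet I) → ∃ q : ℚ, x = (q : ℝ)) ∧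
      (∀ x, IsAccPt x (DSet I) → ∃ q : ℚ, x = (q : ℝ)) := by
  obtain ⟨C, hC, hCQ, hsub⟩ := exists_isCompact_rational_plusSet_subset hI0 hIQ hI hacc
  refine ⟨fun x hx => hCQ x (closure_minimal hsub hC.isClosed hx.mem_closure), fun x hx => ?_⟩
  have hx1 : x ≤ 1 := closure_minimal (fun a ha => ha.1) isClosed_Iic hx.mem_closure
  rcases hx1.eq_or_lt with rfl | hlt
  · exact ⟨1, by simp⟩
  obtain ⟨c, hxc, hc⟩ := exists_between hlt
  obtain ⟨M, hM⟩ := exists_DSet_inter_Iio_subset I hc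
  have hxcl : x ∈ closure (DSet I ∩ Set.Iio c) :=
    isOpen_Iio.closure_inter ⟨hx.mem_closure, hxc⟩
  have hcpt : IsCompact
      (⋃ m ∈ Finset.range M, (fun f : ℝ => ((m : ℝ) - 1 + f) / m) '' C) :=
    (Finset.range M).isCompact_biUnion fun m _ => hC.image (by fun_prop)
  have hxU := closure_minimal (hM.trans (Set.iUnion₂_mono fun m _ => Set.image_mono hsub))
    hcpt.isClosed hxcl
  obtain ⟨m, -, f, hf, rfl⟩ := Set.mem_iUnion₂.1 hxU
  obtain ⟨q, rfl⟩ := hCQ f hf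
  exact ⟨((m : ℚ) - 1 + q) / m, by push_cast; rfl⟩
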